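/- arXiv:cs/0205051 — 7 statements merged into one kernel-verified Lean document; each statement's English description precedes it below -/
import Mathlib

section
/- Let x_1, x_2 ≥ 0 with x_1 + x_2 < 1, and set a = (11/6)·(1 − x_1 − x_2). Then the limit of C_k(x_1, x_2) as k → ∞ exists and equals (F′(x_1) + F′(x_2))·(1 − e^{−a})/a − (F′(x_1)·F(x_2) + F′(x_2)·F(x_1))·(1 − (1 + a)·e^{−a})/a². -/
/-- The cumulative distribution function `F(z) = min((11/6)z, 1)` of the ICUT scheme. -/
noncomputable def Fcdf (z : ℝ) : ℝ := min ((11 / 6) * z) 1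

/-- The probability density `F′(z)`: `11/6` for `z < 6/11` and `0` for `z ≥ 6/11`. -/
noncomputable def Fpdf (z : ℝ) : ℝ := if z < 6 / 11 then 11 / 6 else 0

/-- The density `d_k(x)` with which ICUT cuts an infinitesimal `1,2`-aligned segment at
`x = (x_1, …, x_k)`:
`d_k(x) = (1/k!) ∑_σ [ F′(x_1) ∏_{i : σ(i) < σ(1)} (1 − F(x_i))
                      + F′(x_2) ∏_{i : σ(i) < σ(2)} (1 − F(x_i)) ]`. -/
noncomputable def dDensity (k : ℕ) (hk : 2 ≤ k) (x : Fin k → ℝ) : ℝ :=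
  ((Nat.factorial k : ℝ))⁻¹ *
    ∑ σ : Equiv.Perm (Fin k),
      (Fpdf (x ⟨0, by omega⟩) *
          ∏ i ∈ Finset.univ.filter (fun i => σ i < σ ⟨0, by omega⟩), (1 - Fcdf (x i)) +
        Fpdf (x ⟨1, by omega⟩) *
          ∏ i ∈ Finset.univ.filter (fun i => σ i < σ ⟨1, by omega⟩), (1 - Fcdf (x i)))

/-- `C_k(x_1, x_2) = d_k(x_1, x_2, c, …, c)` where `c = (1 − x_1 − x_2)/(k − 2)`. -/
noncomputable def Cdensity (k : ℕ) (hk : 3 ≤ k) (x1 x2 : ℝ) : ℝ :=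
  dDensity k (by omega)
    (fun i => if (i : ℕ) = 0 then x1 else if (i : ℕ) = 1 then x2
      else (1 - x1 - x2) / ((k : ℝ) - 2))

/-! Draw the random order `σ` by giving every coordinate an independent uniform arrival time in
`[0, 1]`: if `j` arrives at time `t`, each other `i` precedes it independently with probability `t`,
so the average of `∏ (1 - F(x_i))` over the predecessors `i` of `j` is
`∫₀¹ ∏_{i ≠ j} (1 - t F(x_i)) dt`. Algebraically, expand both products over sets `T` of coordinates
other than `j`: the chance that `j` comes after all of `T` is `1 / (#T + 1) = ∫₀¹ t ^ #T dt`.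
At `(x_1, x_2, c, …, c)` all factors but one equal `1 - t F(c)`, and the product of those tends to
`e ^ (-t a)` because `(k - 2) F(c) → a`. -/

open Filter Finset Topology

section RandomOrder

variable {α : Type*} [Fintype α] [LinearOrder α]

lemma card_perm_forall_mem_le_apply_eq {s : Finset α} {u v : α} (hu : u ∈ s) (hv : v ∈ s) :
    #{σ : Equiv.Perm α | ∀ i ∈ s, σ i ≤ σ u} = #{σ : Equiv.Perm α | ∀ i ∈ s, σ i ≤ σ v} := by
  have swap_mem : ∀ i ∈ s, Equiv.swap u v i ∈ s := fun i hi ↦ by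
    rw [Equiv.swap_apply_def]
    split_ifs <;> assumption
  refine card_equiv (Equiv.mulRight (Equiv.swap u v)) fun σ ↦ ?_
  simp only [mem_filter_univ, Equiv.coe_mulRight, Equiv.Perm.mul_apply, Equiv.swap_apply_right]
  exact ⟨fun h i hi ↦ h _ (swap_mem i hi),
    fun h i hi ↦ by simpa using h _ (swap_mem i hi)⟩

lemma card_filter_forall_mem_le_apply_eq_one {s : Finset α} (hs : s.Nonempty)
    (σ : Equiv.Perm α) : #{u ∈ s | ∀ i ∈ s, σ i ≤ σ u} = 1 := by
  obtain ⟨m, hm, hmax⟩ := s.exists_max_image σ hs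
  refine card_eq_one.2 ⟨m, eq_singleton_iff_unique_mem.2 ⟨mem_filter.2 ⟨hm, hmax⟩, fun u hu ↦ ?_⟩⟩
  obtain ⟨hus, humax⟩ := mem_filter.1 hu
  exact σ.injective (le_antisymm (hmax u hus) (humax m hm))

lemma card_mul_card_perm_forall_mem_le_apply {s : Finset α} {j : α} (hj : j ∈ s) :
    #s * #{σ : Equiv.Perm α | ∀ i ∈ s, σ i ≤ σ j} = (Fintype.card α).factorial :=
  calc
    _ = ∑ u ∈ s, #{σ : Equiv.Perm α | ∀ i ∈ s, σ i ≤ σ u} := by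
      rw [sum_congr rfl fun u hu ↦ card_perm_forall_mem_le_apply_eq hu hj, sum_const, smul_eq_mul]
    _ = ∑ σ : Equiv.Perm α, #{u ∈ s | ∀ i ∈ s, σ i ≤ σ u} :=
      sum_card_bipartiteAbove_eq_sum_card_bipartiteBelow _
    _ = (Fintype.card α).factorial := by
      simp only [card_filter_forall_mem_le_apply_eq_one ⟨j, hj⟩, sum_const, card_univ,
        Fintype.card_perm, smul_eq_mul, mul_one]

lemma powerset_filter_apply_lt_apply (σ : Equiv.Perm α) (j : α) :
    powerset {i | σ i < σ j} = {T ∈ powerset {j}ᶜ | ∀ i ∈ insert j T, σ i ≤ σ j} := by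
  ext T
  simp only [mem_powerset, mem_filter, subset_iff, mem_compl, mem_singleton, mem_univ, true_and,
    forall_mem_insert, le_refl, lt_iff_le_and_ne, ne_eq, σ.injective.eq_iff]
  grind

lemma sum_perm_prod_one_add {R : Type*} [Field R] [CharZero R] (f : α → R) (j : α) :
    ∑ σ : Equiv.Perm α, ∏ i with σ i < σ j, (1 + f i) =
      (Fintype.card α).factorial * ∑ T ∈ powerset {j}ᶜ, (∏ i ∈ T, f i) / (#T + 1) := by
  simp only [prod_one_add, powerset_filter_apply_lt_apply, sum_filter]
  rw [sum_comm, mul_sum]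
  refine sum_congr rfl fun T hT ↦ ?_
  have hjT : j ∉ T := fun hj ↦ by simpa using mem_powerset.1 hT hj
  have hcard := card_mul_card_perm_forall_mem_le_apply (mem_insert_self j T)
  rw [card_insert_of_notMem hjT] at hcard
  rw [← sum_filter, sum_const, nsmul_eq_mul, ← hcard]
  push_cast
  field

end RandomOrder

lemma integral_prod_one_add_mul {ι : Type*} (s : Finset ι) (f : ι → ℝ) :
    ∫ t in (0 : ℝ)..1, ∏ i ∈ s, (1 + t * f i) = ∑ T ∈ s.powerset, (∏ i ∈ T, f i) / (#T + 1) := by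
  simp only [prod_one_add, prod_mul_distrib, prod_const]
  rw [intervalIntegral.integral_finsetSum fun T _ ↦
    Continuous.intervalIntegrable (by fun_prop) _ _]
  refine sum_congr rfl fun T _ ↦ ?_
  rw [intervalIntegral.integral_mul_const, integral_pow, one_pow, zero_pow (Nat.succ_ne_zero _),
    sub_zero, one_div_mul_eq_div]

theorem inv_factorial_mul_sum_perm_prod_one_sub {α : Type*} [Fintype α] [LinearOrder α]
    (f : α → ℝ) (j : α) :
    ((Fintype.card α).factorial : ℝ)⁻¹ * ∑ σ : Equiv.Perm α, ∏ i with σ i < σ j, (1 - f i) =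
      ∫ t in (0 : ℝ)..1, ∏ i ∈ {j}ᶜ, (1 - t * f i) := by
  simp only [sub_eq_add_neg, ← mul_neg]
  rw [sum_perm_prod_one_add, integral_prod_one_add_mul,
    inv_mul_cancel_left₀ (Nat.cast_ne_zero.2 (Nat.factorial_ne_zero _))]

lemma prod_compl_singleton_eq_prod_succAbove {M : Type*} [CommMonoid M] {n : ℕ}
    (j : Fin (n + 1)) (g : Fin (n + 1) → M) :
    ∏ i ∈ {j}ᶜ, g i = ∏ i, g (j.succAbove i) := by
  rw [← Fin.image_succAbove_univ, prod_image j.succAbove_right_injective.injOn]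

lemma dDensity_eq_integral (n : ℕ) (hn : 2 ≤ n + 2) (x : Fin (n + 2) → ℝ) :
    dDensity (n + 2) hn x =
      ∫ t in (0 : ℝ)..1, (Fpdf (x 0) * ∏ i, (1 - t * Fcdf (x (Fin.succAbove 0 i))) +
        Fpdf (x 1) * ∏ i, (1 - t * Fcdf (x (Fin.succAbove 1 i)))) := by
  have average_eq (j : Fin (n + 2)) := inv_factorial_mul_sum_perm_prod_one_sub (Fcdf ∘ x) j
  simp only [Fintype.card_fin, Function.comp_apply,
    prod_compl_singleton_eq_prod_succAbove] at average_eq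
  rw [intervalIntegral.integral_add (Continuous.intervalIntegrable (by fun_prop) _ _)
      (Continuous.intervalIntegrable (by fun_prop) _ _),
    intervalIntegral.integral_const_mul, intervalIntegral.integral_const_mul,
    ← average_eq, ← average_eq, dDensity, sum_add_distrib, ← mul_sum, ← mul_sum, mul_add,
    mul_left_comm, mul_left_comm _ (Fpdf _)]
  rfl

lemma Cdensity_eq_integral (n : ℕ) (hn : 3 ≤ n + 3) (x1 x2 : ℝ) :
    Cdensity (n + 3) hn x1 x2 =
      ∫ t in (0 : ℝ)..1, ((Fpdf x1 + Fpdf x2) - t * (Fpdf x1 * Fcdf x2 + Fpdf x2 * Fcdf x1)) *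
        (1 - t * Fcdf ((1 - x1 - x2) / (n + 1 : ℕ))) ^ (n + 1) := by
  have sub_two : ((n + 3 : ℕ) : ℝ) - 2 = (n + 1 : ℕ) := by push_cast; ring
  rw [Cdensity, sub_two, dDensity_eq_integral (n + 1)]
  generalize (1 - x1 - x2) / ((n + 1 : ℕ) : ℝ) = c
  congr 1 with t
  calc
    _ = Fpdf x1 * ((1 - t * Fcdf x2) * (1 - t * Fcdf c) ^ (n + 1)) +
        Fpdf x2 * ((1 - t * Fcdf x1) * (1 - t * Fcdf c) ^ (n + 1)) := by
      simp [Fin.prod_univ_succ (n := n + 1)]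
    _ = _ := by ring

lemma tendsto_integral_mul_one_sub_mul_pow {g : ℝ → ℝ}
    (hg : IntervalIntegrable g MeasureTheory.volume 0 1) {y : ℕ → ℝ} {a : ℝ}
    (hy : Tendsto (fun n : ℕ ↦ n * y n) atTop (𝓝 a)) :
    Tendsto (fun n : ℕ ↦ ∫ t in (0 : ℝ)..1, g t * (1 - t * y n) ^ n) atTop
      (𝓝 (∫ t in (0 : ℝ)..1, g t * Real.exp (-(t * a)))) := by
  refine intervalIntegral.tendsto_integral_filter_of_dominated_convergence
    (fun t ↦ ‖g t‖ * Real.exp (|a| + 1)) (.of_forall fun n ↦ ?_) ?_ (hg.norm.mul_const _)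
    (.of_forall fun t _ ↦ ?_)
  · exact hg.def'.aestronglyMeasurable.mul (Continuous.aestronglyMeasurable (by fun_prop))
  · filter_upwards [hy.abs.eventually_le_const (lt_add_one |a|)] with n hn
    refine .of_forall fun t ht ↦ ?_
    rw [Set.uIoc_of_le zero_le_one] at ht
    rw [norm_mul, norm_pow]
    gcongr
    calc ‖1 - t * y n‖ ^ n
      _ ≤ (1 + |y n|) ^ n := by
        gcongr
        refine (norm_sub_le _ _).trans ?_
        rw [norm_one, norm_mul, Real.norm_of_nonneg ht.1.le, Real.norm_eq_abs]
        gcongr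
        exact mul_le_of_le_one_left (abs_nonneg _) ht.2
      _ ≤ Real.exp |y n| ^ n := by
        gcongr
        rw [add_comm]
        exact Real.add_one_le_exp _
      _ = Real.exp |n * y n| := by rw [← Real.exp_nat_mul, abs_mul, Nat.abs_cast]
      _ ≤ Real.exp (|a| + 1) := by gcongr
  · simp only [sub_eq_add_neg]
    refine (Real.tendsto_one_add_pow_exp_of_tendsto ?_).const_mul (g t)
    simpa only [mul_neg, mul_left_comm] using (hy.const_mul t).neg

lemma tendsto_natCast_mul_Fcdf_div (s : ℝ) :
    Tendsto (fun n : ℕ ↦ n * Fcdf (s / n)) atTop (𝓝 (11 / 6 * s)) := by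
  refine tendsto_const_nhds.congr' ?_
  filter_upwards [eventually_ge_atTop 1,
    tendsto_natCast_atTop_atTop.eventually_ge_atTop (11 / 6 * s)] with n hn hs
  have hn0 : (0 : ℝ) < n := by exact_mod_cast hn
  rw [Fcdf, ← mul_div_assoc, min_eq_left ((div_le_one hn0).2 hs), mul_div_cancel₀ _ hn0.ne']

lemma integral_sub_mul_mul_exp_neg (p q : ℝ) {a : ℝ} (ha : a ≠ 0) :
    ∫ t in (0 : ℝ)..1, (p - t * q) * Real.exp (-(t * a)) =
      p * ((1 - Real.exp (-a)) / a) - q * ((1 - (1 + a) * Real.exp (-a)) / a ^ 2) := by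
  have antideriv (t : ℝ) :
      HasDerivAt (fun t ↦ (q / a ^ 2 - (p - t * q) / a) * Real.exp (-(t * a)))
        ((p - t * q) * Real.exp (-(t * a))) t := by
    have linear_part : HasDerivAt (fun t ↦ q / a ^ 2 - (p - t * q) / a) (q / a) t := by
      simpa [neg_div] using
        ((((hasDerivAt_id t).mul_const q).const_sub p).div_const a).const_sub (q / a ^ 2)
    have exp_part :
        HasDerivAt (fun t ↦ Real.exp (-(t * a))) (Real.exp (-(t * a)) * -a) t := by
      simpa using ((hasDerivAt_id t).mul_const a).neg.exp
    refine (linear_part.mul exp_part).congr_deriv ?_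
    field
  rw [intervalIntegral.integral_eq_sub_of_hasDerivAt (fun t _ ↦ antideriv t)
    (Continuous.intervalIntegrable (by fun_prop) _ _)]
  simp only [one_mul, zero_mul, neg_zero, Real.exp_zero]
  field

theorem Cdensity_tendsto_integral (x1 x2 : ℝ) :
    Tendsto (fun n : ℕ ↦ Cdensity (n + 3) le_add_self x1 x2) atTop
      (𝓝 (∫ t in (0 : ℝ)..1,
        ((Fpdf x1 + Fpdf x2) - t * (Fpdf x1 * Fcdf x2 + Fpdf x2 * Fcdf x1)) *
          Real.exp (-(t * (11 / 6 * (1 - x1 - x2)))))) := by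
  simp only [Cdensity_eq_integral]
  exact (tendsto_integral_mul_one_sub_mul_pow (Continuous.intervalIntegrable (by fun_prop) _ _)
    (tendsto_natCast_mul_Fcdf_div (1 - x1 - x2))).comp (tendsto_add_atTop_nat 1)

theorem Cdensity_tendsto_general (x1 x2 : ℝ) (h12 : x1 + x2 ≠ 1) :
    Tendsto (fun n : ℕ ↦ Cdensity (n + 3) le_add_self x1 x2) atTop
      (𝓝 ((Fpdf x1 + Fpdf x2) *
          ((1 - Real.exp (-((11 / 6) * (1 - x1 - x2)))) / ((11 / 6) * (1 - x1 - x2))) -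
        (Fpdf x1 * Fcdf x2 + Fpdf x2 * Fcdf x1) *
          ((1 - (1 + (11 / 6) * (1 - x1 - x2)) * Real.exp (-((11 / 6) * (1 - x1 - x2)))) /
            ((11 / 6) * (1 - x1 - x2)) ^ 2))) := by
  have ha : 11 / 6 * (1 - x1 - x2) ≠ 0 :=
    mul_ne_zero (by norm_num) fun h ↦ h12 (by linarith)
  rw [← integral_sub_mul_mul_exp_neg _ _ ha]
  exact Cdensity_tendsto_integral x1 x2

/-- for `x_1, x_2 ≥ 0` with `x_1 + x_2 < 1` and `a = (11/6)(1 − x_1 − x_2)`,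
`C_k(x_1, x_2)` converges as `k → ∞` to
`(F′(x_1) + F′(x_2))·(1 − e^{−a})/a − (F′(x_1)F(x_2) + F′(x_2)F(x_1))·(1 − (1+a)e^{−a})/a²`. -/
theorem Cdensity_tendsto (x1 x2 : ℝ) (h1 : 0 ≤ x1) (h2 : 0 ≤ x2) (h12 : x1 + x2 < 1) :
    Filter.Tendsto (fun n : ℕ => Cdensity (n + 3) (by omega) x1 x2) Filter.atTop
      (nhds ((Fpdf x1 + Fpdf x2) *
          ((1 - Real.exp (-((11 / 6) * (1 - x1 - x2)))) / ((11 / 6) * (1 - x1 - x2))) -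
        (Fpdf x1 * Fcdf x2 + Fpdf x2 * Fcdf x1) *
          ((1 - (1 + (11 / 6) * (1 - x1 - x2)) * Real.exp (-((11 / 6) * (1 - x1 - x2)))) /
            ((11 / 6) * (1 - x1 - x2)) ^ 2))) :=
  Cdensity_tendsto_general x1 x2 h12.ne
end

section
/- For every real a with 0 < a ≤ 11/6, (11/6)·(1 − e^{−a})/a − (11/6)·(1 − (1 + a)·e^{−a})/a² ≤ 11/12. -/
/-!
Over the common denominator `a ^ 2` the left-hand side becomes `(11/6) (e^{-a} - 1 + a) / a²`, so
the bound is the quadratic Taylor estimate `e^{-a} ≤ 1 - a + a²/2`. The latter is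
`1 + a + a²/2 ≤ e^a` inverted, because `(1 - a + a²/2) (1 + a + a²/2) = 1 + a⁴/4 ≥ 1`.
-/

theorem exp_neg_le_quadratic_of_nonneg {x : ℝ} (hx : 0 ≤ x) :
    Real.exp (-x) ≤ 1 - x + x ^ 2 / 2 := by
  have quadratic_pos : 0 < 1 - x + x ^ 2 / 2 := by nlinarith [sq_nonneg (x - 1)]
  rw [Real.exp_neg, inv_le_iff_one_le_mul₀ (Real.exp_pos x)]
  calc
    1 ≤ 1 + x ^ 4 / 4 := le_add_of_nonneg_right (by positivity)
    _ = (1 - x + x ^ 2 / 2) * (1 + x + x ^ 2 / 2) := by ring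
    _ ≤ (1 - x + x ^ 2 / 2) * Real.exp x :=
      mul_le_mul_of_nonneg_left (Real.quadratic_le_exp_of_nonneg hx) quadratic_pos.le

theorem one_sub_div_sub_one_sub_one_add_mul_div_sq {K : Type*} [Field K] {a : K} (ha : a ≠ 0)
    (t : K) : (1 - t) / a - (1 - (1 + a) * t) / a ^ 2 = (t - 1 + a) / a ^ 2 := by
  field_simp
  ring

theorem exp_neg_sub_one_add_div_sq_le_half {a : ℝ} (ha : 0 < a) :
    (Real.exp (-a) - 1 + a) / a ^ 2 ≤ 1 / 2 := by
  rw [div_le_iff₀ (by positivity)]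
  linarith [exp_neg_le_quadratic_of_nonneg ha.le]

theorem Cinfty_case2_bound_general (a : ℝ) (ha : 0 < a) :
    (11 / 6) * (1 - Real.exp (-a)) / a -
      (11 / 6) * (1 - (1 + a) * Real.exp (-a)) / a ^ 2 ≤ 11 / 12 :=
  calc
    (11 / 6) * (1 - Real.exp (-a)) / a - (11 / 6) * (1 - (1 + a) * Real.exp (-a)) / a ^ 2
      = (11 / 6) * ((1 - Real.exp (-a)) / a - (1 - (1 + a) * Real.exp (-a)) / a ^ 2) := by ring
    _ = (11 / 6) * ((Real.exp (-a) - 1 + a) / a ^ 2) := by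
      rw [one_sub_div_sub_one_sub_one_add_mul_div_sq ha.ne']
    _ ≤ (11 / 6) * (1 / 2) :=
      mul_le_mul_of_nonneg_left (exp_neg_sub_one_add_div_sq_le_half ha) (by norm_num)
    _ = 11 / 12 := by norm_num

/-- for `0 < a ≤ 11/6`,
`(11/6)(1 − e^{−a})/a − (11/6)(1 − (1+a)e^{−a})/a² ≤ 11/12`. -/
theorem Cinfty_case2_bound (a : ℝ) (h0 : 0 < a) (h1 : a ≤ 11 / 6) :
    (11 / 6) * (1 - Real.exp (-a)) / a -
      (11 / 6) * (1 - (1 + a) * Real.exp (-a)) / a ^ 2 ≤ 11 / 12 :=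
  Cinfty_case2_bound_general a h0
end

section
/- The function C : (0, 11/6) → ℝ defined by C(a) = (11/3)·(1 − e^{−a})/a − (121/36)·(1 − (6/11)·a)·(1 − (1 + a)·e^{−a})/a² is strictly concave on the open interval (0, 11/6). -/
/-!
Put `c = 11/6` and `φ(a) = (1 - e^{-a})/a = ∫_{-1}^0 e^{ax} dx`, the moment generating function of
the uniform law on `(-1, 0]`. Then `C = c (2 φ + (c - a) φ')`, and differentiating twice collapses
to `C'' = c (c - a) φ'''`. Since `φ'''(a) = ∫_{-1}^0 x³ e^{ax} dx < 0`, this is negative for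
`0 < a < c`.
-/

open MeasureTheory ProbabilityTheory Set

theorem iteratedDeriv_natCast_smul_add_sub_smul_deriv {𝕜 F : Type*} [NontriviallyNormedField 𝕜]
    [NormedAddCommGroup F] [NormedSpace 𝕜 F] {n : ℕ} {g : 𝕜 → F} {x : 𝕜} (c : 𝕜)
    (hg : ContDiffAt 𝕜 (n + 1) g x) :
    iteratedDeriv n (fun y => (n : 𝕜) • g y + (c - y) • deriv g y) x =
      (c - x) • iteratedDeriv (n + 1) g x := by
  induction n generalizing g with
  | zero => simp
  | succ n ih =>
    have deriv_eventuallyEq :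
        deriv (fun y => ((n + 1 : ℕ) : 𝕜) • g y + (c - y) • deriv g y) =ᶠ[nhds x]
          fun y => (n : 𝕜) • deriv g y + (c - y) • deriv (deriv g) y := by
      filter_upwards [hg.eventually (by simp)] with y hy
      have hg₁ : HasDerivAt g (deriv g y) y := (hy.differentiableAt (by simp)).hasDerivAt
      have hg₂ : HasDerivAt (deriv g) (deriv (deriv g) y) y :=
        ((hy.derivWithin le_rfl).differentiableAt (by simp)).hasDerivAt
      have h := (hg₁.fun_const_smul ((n + 1 : ℕ) : 𝕜)).fun_add
        (((hasDerivAt_id' y).const_sub c).fun_smul hg₂)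
      rw [h.deriv]
      push_cast
      module
    rw [iteratedDeriv_succ', deriv_eventuallyEq.iteratedDeriv_eq, iteratedDeriv_succ' (n := n + 1)]
    exact ih (by exact_mod_cast hg.derivWithin le_rfl)

theorem strictConcaveOn_const_smul {𝕜 E β : Type*} [CommSemiring 𝕜] [PartialOrder 𝕜]
    [AddCommMonoid E] [SMul 𝕜 E] [AddCommMonoid β] [PartialOrder β] [Module 𝕜 β]
    [PosSMulStrictMono 𝕜 β] {s : Set E} {f : E → β} {c : 𝕜} (hc : 0 < c)
    (hf : StrictConcaveOn 𝕜 s f) : StrictConcaveOn 𝕜 s fun x => c • f x :=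
  ⟨hf.1, fun x hx y hy hxy a b ha hb hab =>
    calc
      a • c • f x + b • c • f y = c • (a • f x + b • f y) := by
        rw [smul_add, smul_comm c, smul_comm c]
      _ < c • f (a • x + b • y) := smul_lt_smul_of_pos_left (hf.2 hx hy hxy ha hb hab) hc⟩

theorem strictConcaveOn_two_mul_add_sub_mul_deriv {s : Set ℝ} {g : ℝ → ℝ} {c : ℝ}
    (hs : IsOpen s) (hconv : Convex ℝ s) (hg : ContDiffOn ℝ 3 g s)
    (hneg : ∀ x ∈ s, (c - x) * iteratedDeriv 3 g x < 0) :
    StrictConcaveOn ℝ s (fun x => 2 * g x + (c - x) * deriv g x) := by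
  have hg' : ContinuousOn (deriv g) s := hg.continuousOn_deriv_of_isOpen hs (by norm_num)
  refine strictConcaveOn_of_deriv2_neg' hconv ?_ fun x hx => ?_
  · exact (hg.continuousOn.const_mul 2).add ((continuousOn_const.sub continuousOn_id).mul hg')
  · have hgx : ContDiffAt ℝ 3 g x := hg.contDiffAt (hs.mem_nhds hx)
    rw [← iteratedDeriv_eq_iterate]
    exact (iteratedDeriv_natCast_smul_add_sub_smul_deriv (n := 2) c
      (hgx.of_le (by norm_num))).trans_lt (hneg x hx)

section Moments

variable {Ω : Type*} {mΩ : MeasurableSpace Ω} {X : Ω → ℝ} {μ : Measure Ω}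

theorem iteratedDeriv_mgf_neg_of_odd {n : ℕ} {t : ℝ} (hn : Odd n) (hX : X ≤ᵐ[μ] 0)
    (hX0 : ¬ X =ᵐ[μ] 0) (ht : t ∈ interior (integrableExpSet X μ)) :
    iteratedDeriv n (mgf X μ) t < 0 := by
  have hint : Integrable (fun ω => -(X ω ^ n * Real.exp (t * X ω))) μ :=
    (integrable_pow_mul_exp_of_mem_interior_integrableExpSet ht n).neg
  have hnonneg : 0 ≤ᵐ[μ] fun ω => -(X ω ^ n * Real.exp (t * X ω)) := by
    filter_upwards [hX] with ω hω
    exact neg_nonneg.2 (mul_nonpos_of_nonpos_of_nonneg (hn.pow_nonpos hω) (Real.exp_pos _).le)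
  rw [iteratedDeriv_mgf ht, ← neg_pos, ← integral_neg]
  refine (integral_nonneg_of_ae hnonneg).lt_of_ne' fun hzero => hX0 ?_
  filter_upwards [(integral_eq_zero_iff_of_nonneg_ae hnonneg hint).1 hzero] with ω hω
  simpa [hn.pos.ne'] using hω

theorem strictConcaveOn_two_mul_mgf_add_sub_mul_deriv_mgf (hX : X ≤ᵐ[μ] 0) (hX0 : ¬ X =ᵐ[μ] 0)
    (c : ℝ) :
    StrictConcaveOn ℝ (interior (integrableExpSet X μ) ∩ Iio c)
      (fun t => 2 * mgf X μ t + (c - t) * deriv (mgf X μ) t) :=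
  strictConcaveOn_two_mul_add_sub_mul_deriv (isOpen_interior.inter isOpen_Iio)
    (convex_integrableExpSet.interior.inter (convex_Iio c))
    ((analyticOnNhd_mgf.contDiffOn isOpen_interior.uniqueDiffOn).mono inter_subset_left)
    fun _ ht => mul_neg_of_pos_of_neg (sub_pos.2 ht.2)
      (iteratedDeriv_mgf_neg_of_odd (by decide) hX hX0 ht.1)

end Moments

section Uniform

variable {a b t : ℝ}

theorem integrableExpSet_id_restrict_Ioc :
    integrableExpSet id (volume.restrict (Ioc a b)) = univ :=
  eq_univ_of_forall fun t =>
    (show Continuous fun x : ℝ => Real.exp (t * id x) by fun_prop).integrableOn_Ioc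

theorem not_id_ae_eq_zero_restrict_Ioc (hab : a < b) :
    ¬ (id : ℝ → ℝ) =ᵐ[volume.restrict (Ioc a b)] 0 := by
  have : NeZero (volume.restrict (Ioc a b)) := ⟨by simp [hab]⟩
  intro hzero
  obtain ⟨x, hx, hx0⟩ := (hzero.and (Measure.ae_ne _ 0)).exists
  exact hx0 hx

theorem mgf_id_restrict_Ioc (hab : a ≤ b) (ht : t ≠ 0) :
    mgf id (volume.restrict (Ioc a b)) t = (Real.exp (t * b) - Real.exp (t * a)) / t := by
  simp only [mgf, id_eq, ← intervalIntegral.integral_of_le hab,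
    intervalIntegral.integral_comp_mul_left _ ht, integral_exp, smul_eq_mul]
  ring

theorem deriv_mgf_id_restrict_Ioc (hab : a ≤ b) (ht : t ≠ 0) :
    deriv (mgf id (volume.restrict (Ioc a b))) t =
      ((b * Real.exp (t * b) - a * Real.exp (t * a)) * t -
        (Real.exp (t * b) - Real.exp (t * a))) / t ^ 2 := by
  have mgf_eventuallyEq : mgf id (volume.restrict (Ioc a b)) =ᶠ[nhds t]
      fun u => (Real.exp (u * b) - Real.exp (u * a)) / u := by
    filter_upwards [isOpen_ne.mem_nhds ht] with u hu using mgf_id_restrict_Ioc hab hu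
  have hasDerivAt_exp_mul (d : ℝ) :
      HasDerivAt (fun u => Real.exp (u * d)) (Real.exp (t * d) * d) t := by
    simpa using ((hasDerivAt_id' t).mul_const d).exp
  rw [mgf_eventuallyEq.deriv_eq, (((hasDerivAt_exp_mul b).fun_sub
    (hasDerivAt_exp_mul a)).fun_div (hasDerivAt_id' t) ht).deriv]
  ring

end Uniform

theorem Cfun_strictConcaveOn_general {c : ℝ} (hc : 0 < c) :
    StrictConcaveOn ℝ (Ioo 0 c)
      (fun a : ℝ =>
        (2 * c) * (1 - Real.exp (-a)) / a -
          c ^ 2 * (1 - c⁻¹ * a) * (1 - (1 + a) * Real.exp (-a)) / a ^ 2) := by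
  have hnonpos : (id : ℝ → ℝ) ≤ᵐ[volume.restrict (Ioc (-1) 0)] 0 :=
    ae_restrict_of_forall_mem measurableSet_Ioc fun _ hx => hx.2
  have hconc := strictConcaveOn_two_mul_mgf_add_sub_mul_deriv_mgf hnonpos
    (not_id_ae_eq_zero_restrict_Ioc (by norm_num)) c
  rw [integrableExpSet_id_restrict_Ioc, interior_univ, univ_inter] at hconc
  refine (strictConcaveOn_const_smul hc
    (hconc.subset Ioo_subset_Iio_self (convex_Ioo 0 c))).congr fun a ha => ?_
  have ha0 : a ≠ 0 := ha.1.ne'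
  simp only [mgf_id_restrict_Ioc (neg_one_lt_zero (R := ℝ)).le ha0,
    deriv_mgf_id_restrict_Ioc (neg_one_lt_zero (R := ℝ)).le ha0, smul_eq_mul,
    mul_zero, mul_neg_one, Real.exp_zero]
  field_simp
  ring

/-- the function
`C(a) = (11/3)(1 − e^{−a})/a − (121/36)(1 − (6/11)a)(1 − (1+a)e^{−a})/a²`
is strictly concave on the open interval `(0, 11/6)`. -/
theorem Cfun_strictConcaveOn :
    StrictConcaveOn ℝ (Set.Ioo (0 : ℝ) (11 / 6))
      (fun a : ℝ =>
        (11 / 3) * (1 - Real.exp (-a)) / a -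
          (121 / 36) * (1 - (6 / 11) * a) * (1 - (1 + a) * Real.exp (-a)) / a ^ 2) := by
  convert Cfun_strictConcaveOn_general (c := 11 / 6) (by norm_num) using 6 <;> norm_num
end

section
/- For every real a with 0 < a < 11/6, the quantity D(a) = −7·e^{−a}·a³ − 3·e^{−a}·a² + 36·a + 30·e^{−a}·a − 6·e^{−a}·a⁴ − 66 + 66·e^{−a} is strictly negative. (Moreover D(0) = 0 and D(11/6) = 0.) -/
/-!
Let `T a = 1 + a + a² / 2 + a³ / 6` be the cubic Taylor polynomial of `exp`. Then
`D a = 6 (6 a - 11) (1 - exp (-a) T a)`, whose last factor is positive for `a > 0` because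
`exp a` exceeds each of its Taylor polynomials there.
-/

open Finset Real
open scoped Nat

theorem sum_range_pow_div_factorial_lt_exp {x : ℝ} (hx : 0 < x) (n : ℕ) :
    ∑ i ∈ range n, x ^ i / i ! < exp x :=
  calc
    ∑ i ∈ range n, x ^ i / i ! < (∑ i ∈ range n, x ^ i / i !) + x ^ n / n ! :=
      lt_add_of_pos_right _ (by positivity)
    _ = ∑ i ∈ range (n + 1), x ^ i / i ! := (sum_range_succ _ n).symm
    _ ≤ exp x := sum_le_exp_of_nonneg hx.le (n + 1)

theorem exp_neg_mul_sum_range_pow_div_factorial_lt_one {x : ℝ} (hx : 0 < x) (n : ℕ) :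
    exp (-x) * ∑ i ∈ range n, x ^ i / i ! < 1 :=
  calc
    exp (-x) * ∑ i ∈ range n, x ^ i / i ! < exp (-x) * exp x := by
      gcongr
      exact sum_range_pow_div_factorial_lt_exp hx n
    _ = 1 := by rw [← exp_add, neg_add_cancel, exp_zero]

/-- The quantity `D(a)`, the numerator of the second derivative of the limiting density function:
`C''(a) = 11 D(a) / (36 a⁴)` for `a ≠ 0`. -/
noncomputable def Dfun (a : ℝ) : ℝ :=
  -7 * exp (-a) * a ^ 3 - 3 * exp (-a) * a ^ 2 + 36 * a +
    30 * exp (-a) * a - 6 * exp (-a) * a ^ 4 - 66 + 66 * exp (-a)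

theorem Dfun_eq_mul (a : ℝ) :
    Dfun a = 6 * (6 * a - 11) * (1 - exp (-a) * ∑ i ∈ range 4, a ^ i / i !) := by
  simp only [Dfun, sum_range_succ, sum_range_zero, Nat.factorial]
  push_cast
  ring

theorem Dfun_neg_of_pos_of_lt {a : ℝ} (ha₀ : 0 < a) (ha₁ : a < 11 / 6) : Dfun a < 0 := by
  rw [Dfun_eq_mul]
  have linear_neg : 6 * (6 * a - 11) < 0 := by linarith
  exact mul_neg_of_neg_of_pos linear_neg
    (sub_pos.mpr (exp_neg_mul_sum_range_pow_div_factorial_lt_one ha₀ 4))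

theorem Dfun_zero : Dfun 0 = 0 := by
  norm_num [Dfun]

theorem Dfun_eleven_sixths : Dfun (11 / 6) = 0 := by
  norm_num [Dfun_eq_mul]

/-- the quantity
`D(a) = −7e^{−a}a³ − 3e^{−a}a² + 36a + 30e^{−a}a − 6e^{−a}a⁴ − 66 + 66e^{−a}`
is strictly negative on `(0, 11/6)`, and vanishes at `a = 0` and `a = 11/6`. -/
theorem Dfun_neg :
    (∀ a : ℝ, 0 < a → a < 11 / 6 →
      -7 * Real.exp (-a) * a ^ 3 - 3 * Real.exp (-a) * a ^ 2 + 36 * a +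
        30 * Real.exp (-a) * a - 6 * Real.exp (-a) * a ^ 4 - 66 + 66 * Real.exp (-a) < 0) ∧
    (-7 * Real.exp (-(0 : ℝ)) * (0 : ℝ) ^ 3 - 3 * Real.exp (-(0 : ℝ)) * (0 : ℝ) ^ 2 +
        36 * (0 : ℝ) + 30 * Real.exp (-(0 : ℝ)) * (0 : ℝ) - 6 * Real.exp (-(0 : ℝ)) * (0 : ℝ) ^ 4 -
        66 + 66 * Real.exp (-(0 : ℝ)) = 0) ∧
    (-7 * Real.exp (-(11 / 6 : ℝ)) * (11 / 6 : ℝ) ^ 3 - 3 * Real.exp (-(11 / 6 : ℝ)) * (11 / 6 : ℝ) ^ 2 +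
        36 * (11 / 6 : ℝ) + 30 * Real.exp (-(11 / 6 : ℝ)) * (11 / 6 : ℝ) -
        6 * Real.exp (-(11 / 6 : ℝ)) * (11 / 6 : ℝ) ^ 4 - 66 + 66 * Real.exp (-(11 / 6 : ℝ)) = 0) :=
  ⟨fun _ ha₀ ha₁ => Dfun_neg_of_pos_of_lt ha₀ ha₁, Dfun_zero, Dfun_eleven_sixths⟩
end

section
/- The function g : (0, 11/6] → ℝ defined by g(a) = (11/6)·[(1 − e^{−a})/a − (1 − (1 + a)·e^{−a})/a²] is nonincreasing on (0, 11/6]; equivalently, for all a, b with 0 < a ≤ b ≤ 11/6 one has g(b) ≤ g(a). -/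
/-!
The two terms of `g` are moments of the exponential on the unit interval:
`(1 - e⁻ᵃ) / a = ∫₀¹ e⁻ᵃᵗ dt` and `(1 - (1 + a) e⁻ᵃ) / a² = ∫₀¹ t e⁻ᵃᵗ dt`. Hence
`g(a) = (11/6) ∫₀¹ (1 - t) e⁻ᵃᵗ dt` is the Laplace transform of a nonnegative function on `[0, 1]`,
and the integrand decreases with `a` for each `t`.
-/

open MeasureTheory Set

theorem antitone_integral_mul_exp_neg {w : ℝ → ℝ} {T : ℝ} (hT : 0 ≤ T)
    (hw : IntervalIntegrable w volume 0 T) (hw_nonneg : ∀ t ∈ Icc 0 T, 0 ≤ w t) :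
    Antitone fun a : ℝ ↦ ∫ t in 0..T, w t * Real.exp (-(a * t)) := by
  have integrable (a : ℝ) :
      IntervalIntegrable (fun t ↦ w t * Real.exp (-(a * t))) volume 0 T :=
    hw.mul_continuousOn (by fun_prop)
  intro a b hab
  refine intervalIntegral.integral_mono_on hT (integrable b) (integrable a) fun t ht ↦ ?_
  have exp_le : Real.exp (-(b * t)) ≤ Real.exp (-(a * t)) :=
    Real.exp_le_exp.2 (neg_le_neg (mul_le_mul_of_nonneg_right hab ht.1))
  exact mul_le_mul_of_nonneg_left exp_le (hw_nonneg t ht)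

theorem hasDerivAt_exp_neg_mul (a t : ℝ) :
    HasDerivAt (fun t ↦ Real.exp (-(a * t))) (-a * Real.exp (-(a * t))) t := by
  simpa [mul_comm] using ((hasDerivAt_id t).const_mul a).neg.exp

theorem integral_exp_neg_mul {a : ℝ} (ha : a ≠ 0) (T : ℝ) :
    ∫ t in 0..T, Real.exp (-(a * t)) = (1 - Real.exp (-(a * T))) / a := by
  have antideriv (t : ℝ) :
      HasDerivAt (fun t ↦ -Real.exp (-(a * t)) / a) (Real.exp (-(a * t))) t := by
    refine ((hasDerivAt_exp_neg_mul a t).neg.div_const a).congr_deriv ?_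
    field_simp
  rw [intervalIntegral.integral_eq_sub_of_hasDerivAt (fun t _ ↦ antideriv t)
    (Continuous.intervalIntegrable (by fun_prop) 0 T), mul_zero, neg_zero, Real.exp_zero]
  ring

theorem integral_mul_exp_neg_mul {a : ℝ} (ha : a ≠ 0) (T : ℝ) :
    ∫ t in 0..T, t * Real.exp (-(a * t)) =
      (1 - (1 + a * T) * Real.exp (-(a * T))) / a ^ 2 := by
  have antideriv (t : ℝ) :
      HasDerivAt (fun t ↦ -((1 + a * t) * Real.exp (-(a * t))) / a ^ 2)
        (t * Real.exp (-(a * t))) t := by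
    have affine : HasDerivAt (fun t ↦ 1 + a * t) a t := by
      simpa using ((hasDerivAt_id t).const_mul a).const_add 1
    refine ((affine.mul (hasDerivAt_exp_neg_mul a t)).neg.div_const (a ^ 2)).congr_deriv ?_
    field_simp
    ring
  rw [intervalIntegral.integral_eq_sub_of_hasDerivAt (fun t _ ↦ antideriv t)
    (Continuous.intervalIntegrable (by fun_prop) 0 T), mul_zero, neg_zero, Real.exp_zero]
  ring

theorem integral_one_sub_mul_exp_neg_mul {a : ℝ} (ha : a ≠ 0) :
    ∫ t in 0..1, (1 - t) * Real.exp (-(a * t)) =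
      (1 - Real.exp (-a)) / a - (1 - (1 + a) * Real.exp (-a)) / a ^ 2 := by
  simp only [sub_mul, one_mul]
  rw [intervalIntegral.integral_sub (Continuous.intervalIntegrable (by fun_prop) 0 1)
      (Continuous.intervalIntegrable (by fun_prop) 0 1),
    integral_exp_neg_mul ha, integral_mul_exp_neg_mul ha, mul_one]

theorem Cinfty_case2_antitone_general {a b : ℝ} (ha : a ≠ 0) (hb : b ≠ 0) (hab : a ≤ b) :
    (11 / 6) * ((1 - Real.exp (-b)) / b - (1 - (1 + b) * Real.exp (-b)) / b ^ 2) ≤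
    (11 / 6) * ((1 - Real.exp (-a)) / a - (1 - (1 + a) * Real.exp (-a)) / a ^ 2) := by
  rw [← integral_one_sub_mul_exp_neg_mul ha, ← integral_one_sub_mul_exp_neg_mul hb]
  have integral_le := antitone_integral_mul_exp_neg (w := fun t ↦ 1 - t) zero_le_one
    (Continuous.intervalIntegrable (by fun_prop) 0 1) (fun _ ht ↦ sub_nonneg.2 ht.2) hab
  exact mul_le_mul_of_nonneg_left integral_le (by norm_num)

/-- the function
`g(a) = (11/6)·[(1 − e^{−a})/a − (1 − (1+a)e^{−a})/a²]`
is nonincreasing on `(0, 11/6]`: for `0 < a ≤ b ≤ 11/6`, `g(b) ≤ g(a)`. -/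
theorem Cinfty_case2_antitone (a b : ℝ) (ha : 0 < a) (hab : a ≤ b) (hb : b ≤ 11 / 6) :
    (11 / 6) * ((1 - Real.exp (-b)) / b - (1 - (1 + b) * Real.exp (-b)) / b ^ 2) ≤
    (11 / 6) * ((1 - Real.exp (-a)) / a - (1 - (1 + a) * Real.exp (-a)) / a ^ 2) :=
  Cinfty_case2_antitone_general ha.ne' (ha.trans_le hab).ne' hab
end

section
/- For every real a > 0, the limit as k → ∞ (k ranging over integers ≥ 2) of (1/(k² − k))·∑_{q=0}^{k−2} q·(1 − a/k)^q exists and equals (1 − (1 + a)·e^{−a})/a². -/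
/-!
By the closed form of the sum, `(∑_{q<n} q (1 - x)^q) x² = (1 - x) - (1 - x)^n (1 + (n - 1) x)`.
If `n xₙ → a`, then `xₙ → 0` and `(1 - xₙ)^n → e^{-a}`, so the right-hand side at `x = xₙ` tends to
`1 - (1 + a) e^{-a}`. Dividing by `(n xₙ)² → a²` gives the limit of `n⁻² ∑_{q<n} q (1 - xₙ)^q`.
With `k = n + 1` and `xₙ = a / (n + 1)`, the normalization `k² - k = n (n + 1)` is asymptotic
to `n²`.
-/

open Filter Finset Topology

theorem sum_range_natCast_mul_pow_mul_one_sub_sq {R : Type*} [CommRing R] (r : R) (n : ℕ) :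
    (∑ q ∈ range n, (q : R) * r ^ q) * (1 - r) ^ 2
      = r - r ^ n * (1 + ((n : R) - 1) * (1 - r)) := by
  induction n with
  | zero => simp
  | succ n ih =>
    rw [sum_range_succ, add_mul, ih]
    push_cast
    ring

theorem tendsto_zero_of_tendsto_natCast_mul {𝕜 : Type*} [DivisionSemiring 𝕜] [CharZero 𝕜]
    [TopologicalSpace 𝕜] [ContinuousSMul ℚ≥0 𝕜] [ContinuousMul 𝕜] {x : ℕ → 𝕜} {a : 𝕜}
    (hx : Tendsto (fun n : ℕ ↦ n * x n) atTop (𝓝 a)) : Tendsto x atTop (𝓝 0) := by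
  rw [← zero_mul a]
  refine (tendsto_inv_atTop_nhds_zero_nat.mul hx).congr' ?_
  filter_upwards [eventually_ne_atTop 0] with n hn
  exact inv_mul_cancel_left₀ (Nat.cast_ne_zero.mpr hn) (x n)

theorem tendsto_sum_range_natCast_mul_one_sub_pow_div_sq {x : ℕ → ℂ} {a : ℂ} (ha : a ≠ 0)
    (hx : Tendsto (fun n : ℕ ↦ n * x n) atTop (𝓝 a)) :
    Tendsto (fun n : ℕ ↦ (∑ q ∈ range n, (q : ℂ) * (1 - x n) ^ q) / (n : ℂ) ^ 2) atTop
      (𝓝 ((1 - (1 + a) * Complex.exp (-a)) / a ^ 2)) := by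
  have x_tendsto_zero : Tendsto x atTop (𝓝 0) := tendsto_zero_of_tendsto_natCast_mul hx
  have pow_tendsto_exp : Tendsto (fun n ↦ (1 - x n) ^ n) atTop (𝓝 (Complex.exp (-a))) := by
    simpa only [sub_eq_add_neg] using
      Complex.tendsto_one_add_pow_exp_of_tendsto (g := fun n ↦ -x n) (by simpa using hx.neg)
  have closed_form_tendsto :
      Tendsto (fun n : ℕ ↦ 1 - x n - (1 - x n) ^ n * (1 + (n * x n - x n))) atTop
        (𝓝 (1 - 0 - Complex.exp (-a) * (1 + (a - 0)))) :=
    (x_tendsto_zero.const_sub 1).sub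
      (pow_tendsto_exp.mul ((hx.sub x_tendsto_zero).const_add 1))
  have quotient_tendsto := closed_form_tendsto.div (hx.pow 2) (pow_ne_zero 2 ha)
  rw [sub_zero, sub_zero, mul_comm (Complex.exp (-a))] at quotient_tendsto
  refine quotient_tendsto.congr' ?_
  filter_upwards [hx.eventually_ne ha] with n hn
  have hxn : x n ≠ 0 := right_ne_zero_of_mul hn
  have closed_form := sum_range_natCast_mul_pow_mul_one_sub_sq (1 - x n) n
  rw [sub_sub_cancel, sub_one_mul] at closed_form
  rw [Pi.div_apply, ← closed_form, mul_pow, mul_div_mul_right _ _ (pow_ne_zero 2 hxn)]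

theorem arithmetico_geometric_sum_tendsto_general (a : ℂ) (ha : a ≠ 0) :
    Tendsto
      (fun k : ℕ ↦ (1 / ((k : ℂ) ^ 2 - (k : ℂ))) *
        ∑ q ∈ range (k - 1), (q : ℂ) * (1 - a / (k : ℂ)) ^ q)
      atTop (𝓝 ((1 - (1 + a) * Complex.exp (-a)) / a ^ 2)) := by
  have ratio_tendsto : Tendsto (fun n : ℕ ↦ (n : ℂ) / (n + 1)) atTop (𝓝 1) :=
    tendsto_natCast_div_add_atTop 1
  have mean_tendsto := tendsto_sum_range_natCast_mul_one_sub_pow_div_sq ha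
    (x := fun n ↦ a / (n + 1))
    (by simpa [mul_div_left_comm] using ratio_tendsto.const_mul a)
  rw [← tendsto_add_atTop_iff_nat 1, ← one_mul (_ / _)]
  refine (ratio_tendsto.mul mean_tendsto).congr fun n ↦ ?_
  have normalization : (n : ℂ) / (n + 1) / n ^ 2 = 1 / (((n : ℂ) + 1) ^ 2 - (n + 1)) := by
    rw [show ((n : ℂ) + 1) ^ 2 - (n + 1) = n * (n + 1) by ring]
    field_simp
  rw [Nat.add_sub_cancel, Nat.cast_succ, ← normalization]
  ring

/-- for `a > 0`,
`(1/(k² − k))·∑_{q=0}^{k−2} q·(1 − a/k)^q  →  (1 − (1 + a)e^{−a})/a²` as `k → ∞`. -/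
theorem arithmetico_geometric_sum_tendsto (a : ℝ) (ha : 0 < a) :
    Filter.Tendsto
      (fun k : ℕ => (1 / ((k : ℝ) ^ 2 - (k : ℝ))) *
        ∑ q ∈ Finset.range (k - 1), (q : ℝ) * (1 - a / (k : ℝ)) ^ q)
      Filter.atTop (nhds ((1 - (1 + a) * Real.exp (-a)) / a ^ 2)) := by
  rw [← tendsto_ofReal_iff]
  exact_mod_cast arithmetico_geometric_sum_tendsto_general a (mod_cast ha.ne')
end

section
/- Let n ≥ 1, let x ∈ ℝ^n have x_i > 0 for every i, and let S be a nonempty finite set of vectors in ℝ^n with nonnegative coordinates. Define the integrality gap γ = sup { min_{y∈S} ∑_i w_i·y_i : w ∈ ℝ^n, w_i ≥ 0 for all i, ∑_i w_i·x_i = 1 }. Then there exists a probability distribution p on S whose performance ratio max_{1≤i≤n} (∑_{y∈S} p_y·y_i)/x_i equals γ, and every probability distribution p on S satisfies max_{1≤i≤n} (∑_{y∈S} p_y·y_i)/x_i ≥ γ. -/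
/-!
The performance ratio `max_i z_i / x_i` of a vector `z` is the maximum of the linear functional
`w ↦ w ⬝ᵥ z` over the compact simplex of weights `w ≥ 0` with `w ⬝ᵥ x = 1`, and `min_{y ∈ S} w ⬝ᵥ y`
is its minimum over `z ∈ convexHull ℝ S`. The points of this hull are the expectations of the
probability distributions on `S`, so the duality is von Neumann's minimax theorem for the bilinear
payoff `w ⬝ᵥ z`.
-/

section Minimax

variable {E F : Type*}
  [TopologicalSpace E] [AddCommGroup E] [Module ℝ E] [IsTopologicalAddGroup E] [ContinuousSMul ℝ E]
  [TopologicalSpace F] [AddCommGroup F] [Module ℝ F] [IsTopologicalAddGroup F] [ContinuousSMul ℝ F]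

theorem exists_isSaddlePointOn_of_bilinear (B : E →ₗ[ℝ] F →ₗ[ℝ] ℝ)
    (hB_left : ∀ w, Continuous fun z ↦ B z w) (hB_right : ∀ z, Continuous (B z))
    {K : Set E} (hK : K.Nonempty) (hK_convex : Convex ℝ K) (hK_compact : IsCompact K)
    {W : Set F} (hW : W.Nonempty) (hW_convex : Convex ℝ W) (hW_compact : IsCompact W) :
    ∃ z ∈ K, ∃ w ∈ W, IsSaddlePointOn K W (fun z w ↦ B z w) z w :=
  Sion.exists_isSaddlePointOn hK hK_convex hK_compact
    (fun w _ ↦ (hB_left w).lowerSemicontinuous.lowerSemicontinuousOn K)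
    (fun w _ ↦ ((B.flip w).convexOn hK_convex).quasiconvexOn)
    hW_convex hW hW_compact
    (fun z _ ↦ (hB_right z).upperSemicontinuous.upperSemicontinuousOn W)
    (fun z _ ↦ ((B z).concaveOn hW_convex).quasiconcaveOn)

end Minimax

section Rounding

variable {ι : Type*} {x z w : ι → ℝ} {S : Finset (ι → ℝ)}

theorem mem_convexHull_iff_exists_expectation :
    z ∈ convexHull ℝ (S : Set (ι → ℝ)) ↔ ∃ p : (ι → ℝ) → ℝ, (∀ y ∈ S, 0 ≤ p y) ∧
      ∑ y ∈ S, p y = 1 ∧ (fun i ↦ ∑ y ∈ S, p y * y i) = z := by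
  simp only [Finset.mem_convexHull', funext_iff, Finset.sum_apply, Pi.smul_apply, smul_eq_mul]

variable [Fintype ι]

/-- The nonnegative weight vectors under which the relaxed solution `x` has cost one: the feasible
region of the integrality gap. -/
def normalizedWeights (x : ι → ℝ) : Set (ι → ℝ) :=
  {w | 0 ≤ w ∧ w ⬝ᵥ x = 1}

/-- The integrality gap of `S` relative to the relaxed solution `x`: the supremum over normalized
weights of the minimum cost of an element of `S`. -/
noncomputable def integralityGap (x : ι → ℝ) (S : Finset (ι → ℝ)) (hS : S.Nonempty) : ℝ :=
  sSup {r | ∃ w ∈ normalizedWeights x, r = S.inf' hS fun y ↦ w ⬝ᵥ y}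

/-- The performance ratio against the relaxed solution `x` of a rounding scheme, which enters only
through its expected outcome `z`. -/
noncomputable def performanceRatio [Nonempty ι] (x z : ι → ℝ) : ℝ :=
  Finset.univ.sup' Finset.univ_nonempty fun i ↦ z i / x i

theorem single_inv_mem_normalizedWeights [DecidableEq ι] {i : ι} (hi : 0 < x i) :
    Pi.single i (x i)⁻¹ ∈ normalizedWeights x :=
  ⟨Pi.single_nonneg.2 (inv_nonneg.2 hi.le), by rw [single_dotProduct, inv_mul_cancel₀ hi.ne']⟩

theorem normalizedWeights_nonempty [Nonempty ι] (hx : ∀ i, 0 < x i) :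
    (normalizedWeights x).Nonempty := by
  classical
  exact ‹Nonempty ι›.elim fun i ↦ ⟨_, single_inv_mem_normalizedWeights (hx i)⟩

theorem convex_normalizedWeights (x : ι → ℝ) : Convex ℝ (normalizedWeights x) :=
  (convex_Ici 0).inter (convex_hyperplane ((dotProductBilin ℝ ℝ).flip x).isLinear 1)

theorem isClosed_normalizedWeights (x : ι → ℝ) : IsClosed (normalizedWeights x) :=
  isClosed_Ici.inter (isClosed_eq (continuous_id.dotProduct continuous_const) continuous_const)

theorem normalizedWeights_subset_Icc (hx : ∀ i, 0 < x i) :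
    normalizedWeights x ⊆ Set.Icc 0 x⁻¹ := by
  rintro w ⟨hw, hwx⟩
  refine ⟨hw, fun i ↦ ?_⟩
  have hle : w i * x i ≤ 1 := hwx ▸ Finset.single_le_sum
    (fun j _ ↦ mul_nonneg (hw j) (hx j).le) (Finset.mem_univ i)
  exact ((le_div_iff₀ (hx i)).2 hle).trans_eq (one_div _)

theorem isCompact_normalizedWeights (hx : ∀ i, 0 < x i) : IsCompact (normalizedWeights x) :=
  isCompact_Icc.of_isClosed_subset (isClosed_normalizedWeights x) (normalizedWeights_subset_Icc hx)

variable [Nonempty ι]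

theorem dotProduct_le_performanceRatio (hx : ∀ i, 0 < x i) (hw : w ∈ normalizedWeights x) :
    w ⬝ᵥ z ≤ performanceRatio x z := by
  have hz : z ≤ performanceRatio x z • x := fun i ↦
    (div_le_iff₀ (hx i)).1 (Finset.le_sup' (fun i ↦ z i / x i) (Finset.mem_univ i))
  calc
    w ⬝ᵥ z ≤ w ⬝ᵥ (performanceRatio x z • x) := dotProduct_le_dotProduct_of_nonneg_left hz hw.1
    _ = performanceRatio x z := by rw [dotProduct_smul, hw.2, smul_eq_mul, mul_one]

theorem performanceRatio_le {c : ℝ} (hx : ∀ i, 0 < x i)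
    (h : ∀ w ∈ normalizedWeights x, w ⬝ᵥ z ≤ c) : performanceRatio x z ≤ c := by
  classical
  refine Finset.sup'_le _ _ fun i _ ↦ ?_
  calc
    z i / x i = Pi.single i (x i)⁻¹ ⬝ᵥ z := by rw [single_dotProduct, div_eq_inv_mul]
    _ ≤ c := h _ (single_inv_mem_normalizedWeights (hx i))

theorem inf'_dotProduct_le_performanceRatio (hx : ∀ i, 0 < x i) (hS : S.Nonempty)
    (hz : z ∈ convexHull ℝ (S : Set (ι → ℝ))) (hw : w ∈ normalizedWeights x) :
    (S.inf' hS fun y ↦ w ⬝ᵥ y) ≤ performanceRatio x z :=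
  (ConvexOn.inf_le_of_mem_convexHull ((dotProductBilin ℝ ℝ w).concaveOn convex_univ)
    (Set.subset_univ _) hz).trans (dotProduct_le_performanceRatio hx hw)

theorem integralityGap_le_performanceRatio (hx : ∀ i, 0 < x i) (hS : S.Nonempty)
    (hz : z ∈ convexHull ℝ (S : Set (ι → ℝ))) :
    integralityGap x S hS ≤ performanceRatio x z := by
  obtain ⟨w₀, hw₀⟩ := normalizedWeights_nonempty hx
  refine csSup_le ⟨_, w₀, hw₀, rfl⟩ ?_
  rintro _ ⟨w, hw, rfl⟩
  exact inf'_dotProduct_le_performanceRatio hx hS hz hw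

theorem inf'_dotProduct_le_integralityGap (hx : ∀ i, 0 < x i) (hS : S.Nonempty)
    (hw : w ∈ normalizedWeights x) : (S.inf' hS fun y ↦ w ⬝ᵥ y) ≤ integralityGap x S hS := by
  obtain ⟨y, hy⟩ := hS
  refine le_csSup ⟨performanceRatio x y, ?_⟩ ⟨w, hw, rfl⟩
  rintro _ ⟨w', hw', rfl⟩
  exact inf'_dotProduct_le_performanceRatio hx ⟨y, hy⟩ (subset_convexHull ℝ _ hy) hw'

theorem exists_performanceRatio_le_integralityGap (hx : ∀ i, 0 < x i) (hS : S.Nonempty) :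
    ∃ z ∈ convexHull ℝ (S : Set (ι → ℝ)), performanceRatio x z ≤ integralityGap x S hS := by
  obtain ⟨z, hz, w, hw, hzw⟩ := exists_isSaddlePointOn_of_bilinear (dotProductBilin ℝ ℝ).flip
    (fun w ↦ continuous_const.dotProduct continuous_id)
    (fun z ↦ continuous_id.dotProduct continuous_const)
    (hS.to_set.convexHull (𝕜 := ℝ)) (convex_convexHull ℝ _)
    (S.finite_toSet.isCompact_convexHull ℝ)
    (normalizedWeights_nonempty hx) (convex_normalizedWeights x) (isCompact_normalizedWeights hx)
  refine ⟨z, hz, le_trans ?_ (inf'_dotProduct_le_integralityGap hx hS hw)⟩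
  exact Finset.le_inf' _ _ fun y hy ↦
    performanceRatio_le hx (hzw y (subset_convexHull ℝ _ hy))

theorem rounding_duality_general (hx : ∀ i, 0 < x i) (hS : S.Nonempty) :
    (∃ p : (ι → ℝ) → ℝ, (∀ y ∈ S, 0 ≤ p y) ∧ ∑ y ∈ S, p y = 1 ∧
      performanceRatio x (fun i ↦ ∑ y ∈ S, p y * y i) = integralityGap x S hS) ∧
    ∀ p : (ι → ℝ) → ℝ, (∀ y ∈ S, 0 ≤ p y) → ∑ y ∈ S, p y = 1 →
      integralityGap x S hS ≤ performanceRatio x (fun i ↦ ∑ y ∈ S, p y * y i) := by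
  constructor
  · obtain ⟨z, hz, hz_le⟩ := exists_performanceRatio_le_integralityGap hx hS
    obtain ⟨p, hp_nonneg, hp_sum, rfl⟩ := mem_convexHull_iff_exists_expectation.1 hz
    exact ⟨p, hp_nonneg, hp_sum, hz_le.antisymm (integralityGap_le_performanceRatio hx hS hz)⟩
  · intro p hp_nonneg hp_sum
    exact integralityGap_le_performanceRatio hx hS
      (mem_convexHull_iff_exists_expectation.2 ⟨p, hp_nonneg, hp_sum, rfl⟩)

end Rounding

/-- LP duality for the rounding problem. With the integrality gap
`γ = sup { min_{y∈S} w·y : w ≥ 0, w·x = 1 }`, some probability distribution `p` on `S`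
has performance ratio `max_i (∑_{y∈S} p_y y_i)/x_i` equal to `γ`, and every probability
distribution on `S` has performance ratio at least `γ`. -/
theorem rounding_duality (n : ℕ) (hn : 0 < n) (x : Fin n → ℝ) (hx : ∀ i, 0 < x i)
    (S : Finset (Fin n → ℝ)) (hS : S.Nonempty) (hSnn : ∀ y ∈ S, ∀ i, 0 ≤ y i) :
    (∃ p : (Fin n → ℝ) → ℝ, (∀ y ∈ S, 0 ≤ p y) ∧ (∑ y ∈ S, p y = 1) ∧
      Finset.univ.sup' ⟨⟨0, hn⟩, Finset.mem_univ _⟩ (fun i => (∑ y ∈ S, p y * y i) / x i) =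
        sSup {r : ℝ | ∃ w : Fin n → ℝ, (∀ i, 0 ≤ w i) ∧ (∑ i, w i * x i = 1) ∧
          r = S.inf' hS (fun y => ∑ i, w i * y i)}) ∧
    (∀ p : (Fin n → ℝ) → ℝ, (∀ y ∈ S, 0 ≤ p y) → (∑ y ∈ S, p y = 1) →
      sSup {r : ℝ | ∃ w : Fin n → ℝ, (∀ i, 0 ≤ w i) ∧ (∑ i, w i * x i = 1) ∧
          r = S.inf' hS (fun y => ∑ i, w i * y i)} ≤
        Finset.univ.sup' ⟨⟨0, hn⟩, Finset.mem_univ _⟩ (fun i => (∑ y ∈ S, p y * y i) / x i)) := by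
  have : Nonempty (Fin n) := ⟨⟨0, hn⟩⟩
  simpa only [performanceRatio, integralityGap, normalizedWeights, dotProduct, Pi.le_def,
    Pi.zero_apply, Set.mem_ofPred_eq, and_assoc] using rounding_duality_general hx hS
end
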